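/- Suppose U is a unitary on (ℂ²)^{⊗(n+2)} ⊗ (ℂ²)^{⊗α} such that (Π_k^± ⊗ ⟨0^α|) U (Π_k^± ⊗ |0^α⟩) = Π_k^± P^{up} Π_k^±. Then V := ((I^{⊗n} ⊗ (HZ) ⊗ I) ⊗ I^{⊗α}) U satisfies (Π_k ⊗ ⟨0^α|) V (Π_k ⊗ |0^α⟩) = Δ_k^{up} / (√2 · K^{up}). -/

import Mathlib

open BigOperators Matrix Kronecker

attribute [local instance] Classical.propDecidable

noncomputable section

namespace QWSC

/-- A finite abstract simplicial complex on the vertex set `Fin n`: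
a family of vertex sets closed under taking subsets. -/
def IsComplex (n : ℕ) (X : Finset (Finset (Fin n))) : Prop :=
  ∀ s ∈ X, ∀ t ⊆ s, t ∈ X

/-- The weighted boundary operator `∂_k : C_k → C_{k-1}` written as a matrix in the
orthonormal chain bases (rows are indexed by `(k-1)`-simplices, columns by `k`-simplices;
a `k`-simplex has `k+1` vertices).  On the orthonormal basis vector of
`σ = {v_0 < … < v_k}` it has entries `(-1)^j w(v_j)` at the face `σ \ {v_j}`. -/
def boundary (n : ℕ) (X : Finset (Finset (Fin n))) (w : Fin n → ℝ) (k : ℕ) :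
    Matrix (Finset (Fin n)) (Finset (Fin n)) ℝ :=
  Matrix.of fun τ σ =>
    if σ ∈ X ∧ σ.card = k + 1 ∧ τ ⊆ σ ∧ τ.card = k then
      ∑ v ∈ σ \ τ, (-1 : ℝ) ^ ((σ.filter fun u => u < v).card) * w v
    else 0

/-- The weighted up Laplacian `Δ_k^{up} = ∂_{k+1} ∂_{k+1}^*`. -/
def upLap (n : ℕ) (X : Finset (Finset (Fin n))) (w : Fin n → ℝ) (k : ℕ) :
    Matrix (Finset (Fin n)) (Finset (Fin n)) ℝ :=
  boundary n X w (k + 1) * (boundary n X w (k + 1))ᵀ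

/-- The weighted down Laplacian `Δ_k^{down} = ∂_k^* ∂_k`. -/
def downLap (n : ℕ) (X : Finset (Finset (Fin n))) (w : Fin n → ℝ) (k : ℕ) :
    Matrix (Finset (Fin n)) (Finset (Fin n)) ℝ :=
  (boundary n X w k)ᵀ * boundary n X w k

/-- The weighted combinatorial Laplacian `Δ_k = Δ_k^{up} + Δ_k^{down}`. -/
def fullLap (n : ℕ) (X : Finset (Finset (Fin n))) (w : Fin n → ℝ) (k : ℕ) :
    Matrix (Finset (Fin n)) (Finset (Fin n)) ℝ :=
  upLap n X w k + downLap n X w k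

/-- `true` iff removing the vertex `v` from `σ` reverses the induced orientation,
i.e. the position of `v` in the increasing ordering of `σ` is odd. -/
def faceFlip (n : ℕ) (σ : Finset (Fin n)) (v : Fin n) : Bool :=
  decide ((σ.filter fun u => u < v).card % 2 = 1)

/-- An oriented simplex: a vertex set together with an orientation bit
(`false` = positively oriented, `true` = negatively oriented). -/
abbrev OSimp (n : ℕ) := Finset (Fin n) × Bool

/-- Up-adjacency `σ ∼↑ σ'` of oriented simplices: the vertex sets are distinct, their
union is a common coface belonging to `X`, and the orientations induced on the common
coface by `σ` and by `σ'` agree. -/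
def UpAdj (n : ℕ) (X : Finset (Finset (Fin n))) (σ σ' : OSimp n) : Prop :=
  σ.1 ≠ σ'.1 ∧ σ.1 ∪ σ'.1 ∈ X ∧ (σ.1 ∪ σ'.1).card = σ.1.card + 1 ∧
    σ'.1.card = σ.1.card ∧
    ∀ v ∈ σ'.1 \ σ.1, ∀ v' ∈ σ.1 \ σ'.1,
      xor σ.2 (faceFlip n (σ.1 ∪ σ'.1) v) = xor σ'.2 (faceFlip n (σ.1 ∪ σ'.1) v')

/-- Down-adjacency `σ ∼↓ σ'` of oriented simplices: the vertex sets are distinct, they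
share a common face (their intersection, of cardinality one less), and the orientations
induced on the common face by `σ` and by `σ'` agree. -/
def DownAdj (n : ℕ) (σ σ' : OSimp n) : Prop :=
  σ.1 ≠ σ'.1 ∧ (σ.1 ∩ σ'.1).card + 1 = σ.1.card ∧ σ'.1.card = σ.1.card ∧
    ∀ v ∈ σ.1 \ σ'.1, ∀ v' ∈ σ'.1 \ σ.1,
      xor σ.2 (faceFlip n σ.1 v) = xor σ'.2 (faceFlip n σ'.1 v')

/-- `up(σ)`: the vertices `u ∉ σ` with `σ ∪ {u} ∈ X`. -/
def upSet (n : ℕ) (X : Finset (Finset (Fin n))) (σ : Finset (Fin n)) : Finset (Fin n) :=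
  Finset.univ.filter fun u => u ∉ σ ∧ insert u σ ∈ X

/-- The set of `k`-simplices of `X` (those with `k+1` vertices). -/
def simplices (n : ℕ) (X : Finset (Finset (Fin n))) (k : ℕ) : Finset (Finset (Fin n)) :=
  X.filter fun s => s.card = k + 1

/-- Normalization constant `K^{up} = max_{σ∈X_k} Σ_{u∈V∖σ} Σ_{v∈σ∪{u}} w(u)w(v)`. -/
def Kup (n : ℕ) (X : Finset (Finset (Fin n))) (w : Fin n → ℝ) (k : ℕ) : ℝ :=
  sSup {x : ℝ | ∃ σ ∈ X, σ.card = k + 1 ∧ x = ∑ u ∈ σᶜ, ∑ v ∈ insert u σ, w u * w v}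

/-- Normalization constant `K^{down} = max_{σ∈X_k} Σ_{u∈σ} Σ_{v∈V∖(σ∖{u})} w(u)w(v)`. -/
def Kdown (n : ℕ) (X : Finset (Finset (Fin n))) (w : Fin n → ℝ) (k : ℕ) : ℝ :=
  sSup {x : ℝ | ∃ σ ∈ X, σ.card = k + 1 ∧ x = ∑ u ∈ σ, ∑ v ∈ (σ.erase u)ᶜ, w u * w v}

/-- Normalization constant `K = max_{σ∈X_k} (Σ_{v∈V} w(v)² + Σ_{u∈V∖σ} Σ_{v∈σ} w(u)w(v))`. -/
def Kfull (n : ℕ) (X : Finset (Finset (Fin n))) (w : Fin n → ℝ) (k : ℕ) : ℝ :=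
  sSup {x : ℝ | ∃ σ ∈ X, σ.card = k + 1 ∧
    x = (∑ v : Fin n, w v ^ 2) + ∑ u ∈ σᶜ, ∑ v ∈ σ, w u * w v}

/-- The `k`-th chain space `C_k`: the span of the basis vectors indexed by
`k`-simplices of `X`, inside the coordinate space of the orthonormal chain basis. -/
def chainSpace (n : ℕ) (X : Finset (Finset (Fin n))) (k : ℕ) :
    Submodule ℝ (Finset (Fin n) → ℝ) :=
  Submodule.span ℝ ((fun σ => Pi.single σ (1 : ℝ)) '' {σ | σ ∈ X ∧ σ.card = k + 1})

/-- The state space `S_k = X_k^± ∪ {Θ}` of the walks; `none` is the absorbing state `Θ`. -/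
abbrev SState (n : ℕ) := Option (OSimp n)

/-- A state is a member of `S_k`: either the absorbing state, or an oriented
`k`-simplex of `X`. -/
def valid (n : ℕ) (X : Finset (Finset (Fin n))) (k : ℕ) : SState n → Prop
  | none => True
  | some σ => σ.1 ∈ X ∧ σ.1.card = k + 1

/-- `η^{up}_σ = 1 − (1/K^{up}) Σ_{τ∈X_k^+} |(Δ_k^{up})_{τ,σ_+}|`. -/
def etaUp (n : ℕ) (X : Finset (Finset (Fin n))) (w : Fin n → ℝ) (k : ℕ) (σ : OSimp n) : ℝ :=
  1 - (∑ τ ∈ simplices n X k, |upLap n X w k τ σ.1|) / Kup n X w k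

/-- `η^{down}_σ = 1 − (1/K^{down}) Σ_{τ∈X_k^+} |(Δ_k^{down})_{τ,σ_+}|`. -/
def etaDown (n : ℕ) (X : Finset (Finset (Fin n))) (w : Fin n → ℝ) (k : ℕ) (σ : OSimp n) : ℝ :=
  1 - (∑ τ ∈ simplices n X k, |downLap n X w k τ σ.1|) / Kdown n X w k

/-- `η_σ = 1 − (1/K) Σ_{τ∈X_k^+} |(Δ_k)_{τ,σ_+}|`. -/
def etaFull (n : ℕ) (X : Finset (Finset (Fin n))) (w : Fin n → ℝ) (k : ℕ) (σ : OSimp n) : ℝ :=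
  1 - (∑ τ ∈ simplices n X k, |fullLap n X w k τ σ.1|) / Kfull n X w k

/-- The up-walk transition matrix `P^{up}` on `S_k`. -/
def Pup (n : ℕ) (X : Finset (Finset (Fin n))) (w : Fin n → ℝ) (k : ℕ) :
    SState n → SState n → ℝ
  | some σ, some σ' =>
      if σ.1 ∈ X ∧ σ.1.card = k + 1 ∧ σ'.1 ∈ X ∧ σ'.1.card = k + 1 then
        if σ = σ' then (∑ u ∈ upSet n X σ.1, w u ^ 2) / Kup n X w k
        else if UpAdj n X σ σ' then
          ((∑ v ∈ σ.1 \ σ'.1, w v) * (∑ v ∈ σ'.1 \ σ.1, w v)) / Kup n X w k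
        else 0
      else 0
  | some σ, none => if σ.1 ∈ X ∧ σ.1.card = k + 1 then etaUp n X w k σ else 0
  | none, none => 1
  | none, some _ => 0

/-- The down-walk transition matrix `P^{down}` on `S_k`. -/
def Pdown (n : ℕ) (X : Finset (Finset (Fin n))) (w : Fin n → ℝ) (k : ℕ) :
    SState n → SState n → ℝ
  | some σ, some σ' =>
      if σ.1 ∈ X ∧ σ.1.card = k + 1 ∧ σ'.1 ∈ X ∧ σ'.1.card = k + 1 then
        if σ = σ' then (∑ v ∈ σ.1, w v ^ 2) / Kdown n X w k
        else if DownAdj n σ σ' then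
          ((∑ v ∈ σ.1 \ σ'.1, w v) * (∑ v ∈ σ'.1 \ σ.1, w v)) / Kdown n X w k
        else 0
      else 0
  | some σ, none => if σ.1 ∈ X ∧ σ.1.card = k + 1 then etaDown n X w k σ else 0
  | none, none => 1
  | none, some _ => 0

/-- The harmonic-walk transition matrix `P` on `S_k`. -/
def Pharm (n : ℕ) (X : Finset (Finset (Fin n))) (w : Fin n → ℝ) (k : ℕ) :
    SState n → SState n → ℝ
  | some σ, some σ' =>
      if σ.1 ∈ X ∧ σ.1.card = k + 1 ∧ σ'.1 ∈ X ∧ σ'.1.card = k + 1 then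
        if σ = σ' then
          ((∑ u ∈ upSet n X σ.1, w u ^ 2) + ∑ v ∈ σ.1, w v ^ 2) / Kfull n X w k
        else if DownAdj n σ σ' ∧ ¬ UpAdj n X σ (σ'.1, !σ'.2) then
          ((∑ v ∈ σ.1 \ σ'.1, w v) * (∑ v ∈ σ'.1 \ σ.1, w v)) / Kfull n X w k
        else 0
      else 0
  | some σ, none => if σ.1 ∈ X ∧ σ.1.card = k + 1 then etaFull n X w k σ else 0
  | none, none => 1
  | none, some _ => 0

/-! ### Quantum encodings -/

/-- The computational basis of `(ℂ²)^{⊗(n+2)}`: `n` membership qubits, one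
orientation qubit, and one qubit flagging the absorbing state. -/
abbrev QIdx (n : ℕ) := (Fin n → Bool) × Bool × Bool

/-- The encoding of states of `S_k` as computational basis states:
`|σ⟩ = |x_σ⟩|s(σ)⟩|0⟩` and `|Θ⟩ = |0^n⟩|0⟩|1⟩`. -/
def encode (n : ℕ) : SState n → QIdx n
  | none => (fun _ => false, false, true)
  | some σ => (fun i => decide (i ∈ σ.1), σ.2, false)

/-- The all-zeros basis state `|0^{n+2}⟩`. -/
def zeroQ (n : ℕ) : QIdx n := (fun _ => false, false, false)

/-- The projector `Π_k^±` onto the span of the encoded oriented `k`-simplices of `X`. -/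
def PiPM (n : ℕ) (X : Finset (Finset (Fin n))) (k : ℕ) : Matrix (QIdx n) (QIdx n) ℂ :=
  Matrix.of fun p q =>
    if p = q ∧ ∃ σ : OSimp n, σ.1 ∈ X ∧ σ.1.card = k + 1 ∧ p = encode n (some σ) then 1 else 0

/-- The projector `Π_k` onto the span of the encoded positively oriented
`k`-simplices of `X`. -/
def PiK (n : ℕ) (X : Finset (Finset (Fin n))) (k : ℕ) : Matrix (QIdx n) (QIdx n) ℂ :=
  Matrix.of fun p q =>
    if p = q ∧ ∃ s ∈ X, s.card = k + 1 ∧ p = encode n (some (s, false)) then 1 else 0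

/-- Decode a basis state into the state of `S_k` it represents (if any). -/
def decodeQ (n : ℕ) : QIdx n → Option (SState n) := fun q =>
  if q.2.2 = false then some (some ((Finset.univ.filter fun i => q.1 i = true), q.2.1))
  else if q = encode n none then some none else none

/-- Identify a transition kernel `P` on `S_k` with the operator on `(ℂ²)^{⊗(n+2)}`
having `⟨σ'|P|σ⟩ = P_{σ,σ'}` for `σ, σ' ∈ S_k`, vanishing off the span of `S_k`. -/
def toQMat (n : ℕ) (P : SState n → SState n → ℝ) : Matrix (QIdx n) (QIdx n) ℂ :=
  Matrix.of fun q' q =>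
    match decodeQ n q, decodeQ n q' with
    | some σ, some σ' => (P σ σ' : ℂ)
    | _, _ => 0

/-- Identify a matrix indexed by vertex sets (acting on the chain space in the
orthonormal basis of positively oriented simplices) with an operator on
`(ℂ²)^{⊗(n+2)}` supported on the encoded positively oriented simplices. -/
def lapQ (n : ℕ) (L : Matrix (Finset (Fin n)) (Finset (Fin n)) ℝ) :
    Matrix (QIdx n) (QIdx n) ℂ :=
  Matrix.of fun q' q =>
    if q'.2.1 = false ∧ q'.2.2 = false ∧ q.2.1 = false ∧ q.2.2 = false then
      (L (Finset.univ.filter fun i => q'.1 i = true)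
         (Finset.univ.filter fun i => q.1 i = true) : ℂ)
    else 0

/-- The SWAP unitary exchanging the two `(n+2)`-qubit registers. -/
def swapMat (n : ℕ) : Matrix (QIdx n × QIdx n) (QIdx n × QIdx n) ℂ :=
  Matrix.of fun p q => if p.1 = q.2 ∧ p.2 = q.1 then 1 else 0

/-- The compression `(· ⊗ ⟨0^{n+2}|) W (· ⊗ |0^{n+2}⟩)` of an operator on two
`(n+2)`-qubit registers to the first register. -/
def compress (n : ℕ) (W : Matrix (QIdx n × QIdx n) (QIdx n × QIdx n) ℂ) :
    Matrix (QIdx n) (QIdx n) ℂ :=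
  Matrix.of fun q' q => W (q', zeroQ n) (q, zeroQ n)

/-- The compression `(· ⊗ ⟨0^α|) W (· ⊗ |0^α⟩)` of an operator on the system
register together with an `α`-qubit ancilla register. -/
def compressA (n α : ℕ) (W : Matrix (QIdx n × (Fin α → Bool)) (QIdx n × (Fin α → Bool)) ℂ) :
    Matrix (QIdx n) (QIdx n) ℂ :=
  Matrix.of fun q' q => W (q', fun _ => false) (q, fun _ => false)

/-- The gate `I^{⊗n} ⊗ (HZ) ⊗ I` acting on the orientation qubit, where `H` is the
Hadamard gate and `Z` the Pauli-Z gate. -/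
def hzGate (n : ℕ) : Matrix (QIdx n) (QIdx n) ℂ :=
  Matrix.of fun p q =>
    if p.1 = q.1 ∧ p.2.2 = q.2.2 then
      (if p.2.1 = false ∧ q.2.1 = true then -((Real.sqrt 2 : ℂ))⁻¹ else ((Real.sqrt 2 : ℂ))⁻¹)
    else 0



lemma bd_ne (n : ℕ) (X : Finset (Finset (Fin n))) (w : Fin n → ℝ) (k : ℕ)
    (s ρ : Finset (Fin n)) (h : boundary n X w (k+1) s ρ ≠ 0) :
    ρ ∈ X ∧ ρ.card = k + 2 ∧ s ⊆ ρ ∧ s.card = k + 1 := by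
  by_contra h'
  exact h (by rw [boundary, Matrix.of_apply, if_neg h'])

lemma bd_insert (n : ℕ) (X : Finset (Finset (Fin n))) (w : Fin n → ℝ) (k : ℕ)
    (s : Finset (Fin n)) (u : Fin n) (hu : u ∉ s) (hs : s.card = k + 1)
    (hX : insert u s ∈ X) :
    boundary n X w (k+1) s (insert u s) =
      (-1 : ℝ) ^ (((insert u s).filter fun x => x < u).card) * w u := by
  rw [boundary, Matrix.of_apply, if_pos]
  · have : insert u s \ s = {u} := by
      ext x; simp only [Finset.mem_sdiff, Finset.mem_insert, Finset.mem_singleton]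
      constructor
      · rintro ⟨h | h, h'⟩
        · exact h
        · exact absurd h h'
      · rintro rfl; exact ⟨Or.inl rfl, hu⟩
    rw [this, Finset.sum_singleton]
  · refine ⟨hX, ?_, Finset.subset_insert _ _, hs⟩
    rw [Finset.card_insert_of_notMem hu, hs]

lemma neg_pow_flip (m : ℕ) : (-1 : ℝ) ^ m = if decide (m % 2 = 1) = true then -1 else 1 := by
  by_cases h : m % 2 = 1
  · rw [if_pos (by simpa using h)]; exact (Nat.odd_iff.mpr h).neg_one_pow
  · rw [if_neg (by simpa using h)]
    exact (Nat.even_iff.mpr (by omega)).neg_one_pow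

lemma exists_ins (n k : ℕ) (s ρ : Finset (Fin n)) (hc : ρ.card = k + 2) (h : s ⊆ ρ)
    (hs : s.card = k + 1) : ∃ u, u ∉ s ∧ ρ = insert u s := by
  have h1 : (ρ \ s).card = 1 := by rw [Finset.card_sdiff_of_subset h]; omega
  obtain ⟨u, hu⟩ := Finset.card_eq_one.mp h1
  have hu' : u ∈ ρ \ s := by rw [hu]; simp
  refine ⟨u, (Finset.mem_sdiff.mp hu').2, ?_⟩
  rw [← Finset.sdiff_union_of_subset h, hu]; rfl

lemma lap_diag (n : ℕ) (X : Finset (Finset (Fin n))) (w : Fin n → ℝ) (k : ℕ)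
    (s : Finset (Fin n)) (hs : s.card = k + 1) :
    upLap n X w k s s = ∑ u ∈ upSet n X s, w u ^ 2 := by
  rw [upLap, Matrix.mul_apply]
  symm
  apply Finset.sum_of_injOn (fun u => insert u s)
  · intro u hu v hv huv
    simp only [upSet, Finset.coe_filter, Set.mem_setOf_eq] at hu hv
    have : u ∈ insert v s := by
      have h : insert u s = insert v s := huv
      rw [← h]; exact Finset.mem_insert_self _ _
    rcases Finset.mem_insert.mp this with h | h
    · exact h
    · exact absurd h hu.2.1
  · intro u _; simp
  · intro ρ _ hρ
    by_contra h0
    have hb : boundary n X w (k+1) s ρ ≠ 0 := left_ne_zero_of_mul h0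
    obtain ⟨a, b, c, d⟩ := bd_ne n X w k s ρ hb
    obtain ⟨u, hu, rfl⟩ := exists_ins n k s ρ b c d
    exact hρ ⟨u, by simp only [upSet, Finset.coe_filter, Set.mem_setOf_eq]
                    exact ⟨Finset.mem_univ _, hu, a⟩, rfl⟩
  · intro u hu
    simp only [upSet, Finset.mem_filter] at hu
    rw [Matrix.transpose_apply, bd_insert n X w k s u hu.2.1 hs hu.2.2, mul_mul_mul_comm,
      ← pow_add, Even.neg_one_pow ⟨_, rfl⟩]
    ring

lemma lap_off (n : ℕ) (X : Finset (Finset (Fin n))) (w : Fin n → ℝ) (k : ℕ)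
    (s t : Finset (Fin n)) (hs : s.card = k + 1) (ht : t.card = k + 1) (hst : s ≠ t) :
    upLap n X w k s t =
      boundary n X w (k+1) s (t ∪ s) * boundary n X w (k+1) t (t ∪ s) := by
  rw [upLap, Matrix.mul_apply]
  apply Finset.sum_eq_single
  · intro ρ _ hρ
    by_contra h0
    obtain ⟨a, b, c, d⟩ := bd_ne n X w k s ρ (left_ne_zero_of_mul h0)
    obtain ⟨_, _, c', _⟩ := bd_ne n X w k t ρ (right_ne_zero_of_mul h0)
    apply hρ
    symm
    apply Finset.eq_of_subset_of_card_le (Finset.union_subset c' c)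
    by_contra hlt
    have h1 : (t ∪ s).card ≤ k + 1 := by omega
    have e1 := Finset.eq_of_subset_of_card_le (Finset.subset_union_left (s₁ := t) (s₂ := s))
      (by omega)
    have e2 := Finset.eq_of_subset_of_card_le (Finset.subset_union_right (s₁ := t) (s₂ := s))
      (by omega)
    exact hst (e2.trans e1.symm)
  · intro h; exact absurd (Finset.mem_univ _) h

lemma lap_zero (n : ℕ) (X : Finset (Finset (Fin n))) (hX : IsComplex n X) (w : Fin n → ℝ) (k : ℕ)
    (s t : Finset (Fin n)) (h : upLap n X w k s t ≠ 0) :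
    (s ∈ X ∧ s.card = k + 1) ∧ (t ∈ X ∧ t.card = k + 1) := by
  rw [upLap, Matrix.mul_apply] at h
  obtain ⟨ρ, _, h0⟩ := Finset.exists_ne_zero_of_sum_ne_zero h
  obtain ⟨a, b, c, d⟩ := bd_ne n X w k s ρ (left_ne_zero_of_mul h0)
  obtain ⟨_, _, c', d'⟩ := bd_ne n X w k t ρ (right_ne_zero_of_mul h0)
  exact ⟨⟨hX _ a _ c, d⟩, ⟨hX _ a _ c', d'⟩⟩

lemma key (n : ℕ) (X : Finset (Finset (Fin n))) (w : Fin n → ℝ) (k : ℕ)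
    (s t : Finset (Fin n)) (hsX : s ∈ X) (hs : s.card = k + 1) (htX : t ∈ X)
    (ht : t.card = k + 1) :
    Pup n X w k (some (t, false)) (some (s, false)) -
      Pup n X w k (some (t, false)) (some (s, true)) = upLap n X w k s t / Kup n X w k := by
  have hc : t ∈ X ∧ t.card = k + 1 ∧ s ∈ X ∧ s.card = k + 1 := ⟨htX, ht, hsX, hs⟩
  by_cases hst : s = t
  · subst hst
    rw [lap_diag n X w k s hs]
    simp only [Pup]
    rw [if_pos hc, if_pos hc, if_pos trivial, if_neg (by simp), if_neg, sub_zero]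
    exact fun h => h.1 rfl
  · rw [lap_off n X w k s t hs ht hst]
    simp only [Pup]
    have n1 : ∀ b : Bool, ¬ ((t, false) = (s, b)) := fun b h => hst (congrArg Prod.fst h).symm
    rw [if_pos hc, if_pos hc, if_neg (n1 false), if_neg (n1 true)]
    by_cases hu : t ∪ s ∈ X ∧ (t ∪ s).card = k + 2
    · obtain ⟨hu, hcu⟩ := hu
      obtain ⟨v, hv, ev⟩ := exists_ins n k t (t ∪ s) hcu Finset.subset_union_left ht
      obtain ⟨v', hv', ev'⟩ := exists_ins n k s (t ∪ s) hcu Finset.subset_union_right hs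
      have d1 : s \ t = {v} := by
        have : (t ∪ s) \ t = s \ t := Finset.union_sdiff_left t s
        rw [← this, ev, Finset.insert_sdiff_of_notMem _ hv, Finset.sdiff_self]; rfl
      have d2 : t \ s = {v'} := by
        have : (t ∪ s) \ s = t \ s := Finset.union_sdiff_right t s
        rw [← this, ev', Finset.insert_sdiff_of_notMem _ hv', Finset.sdiff_self]; rfl
      have b1 : boundary n X w (k+1) t (t ∪ s) =
          (if faceFlip n (t ∪ s) v = true then -1 else 1) * w v := by
        have := bd_insert n X w k t v hv ht (ev ▸ hu)
        rwa [← ev, neg_pow_flip] at this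
      have b2 : boundary n X w (k+1) s (t ∪ s) =
          (if faceFlip n (t ∪ s) v' = true then -1 else 1) * w v' := by
        have := bd_insert n X w k s v' hv' hs (ev' ▸ hu)
        rwa [← ev', neg_pow_flip] at this
      rw [b1, b2]
      have hadj : ∀ b : Bool, UpAdj n X (t, false) (s, b) ↔
          xor false (faceFlip n (t ∪ s) v) = xor b (faceFlip n (t ∪ s) v') := by
        intro b
        simp only [UpAdj, d1, d2, Finset.mem_singleton, forall_eq]
        constructor
        · exact fun h => h.2.2.2.2
        · exact fun h => ⟨fun h => hst h.symm, hu, by omega, by omega, h⟩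
      rw [d1, d2, Finset.sum_singleton, Finset.sum_singleton]
      simp only [hadj]
      cases faceFlip n (t ∪ s) v <;> cases faceFlip n (t ∪ s) v' <;> simp <;> ring
    · have hb : boundary n X w (k+1) t (t ∪ s) = 0 := by
        by_contra h
        have := bd_ne n X w k _ _ h
        exact hu ⟨this.1, this.2.1⟩
      have hadj : ∀ b : Bool, ¬ UpAdj n X (t, false) (s, b) := by
        rintro b ⟨_, h1, h2, _⟩
        exact hu ⟨h1, by simp only at h2; omega⟩
      rw [if_neg (hadj _), if_neg (hadj _), hb]; simp

lemma decode_encode (n : ℕ) (σ : OSimp n) : decodeQ n (encode n (some σ)) = some (some σ) := by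
  simp [decodeQ, encode]

lemma exists_encode (n : ℕ) (p : QIdx n) (h : p.2.2 = false) :
    p = encode n (some (Finset.univ.filter fun i => p.1 i = true, p.2.1)) := by
  obtain ⟨a, b, c⟩ := p
  simp only at h; subst h
  simp [encode]

lemma piPM_diag (n : ℕ) (X : Finset (Finset (Fin n))) (k : ℕ) :
    PiPM n X k = Matrix.diagonal fun p =>
      if ∃ σ : OSimp n, σ.1 ∈ X ∧ σ.1.card = k + 1 ∧ p = encode n (some σ) then 1 else 0 := by
  ext p q
  rw [PiPM, Matrix.of_apply, Matrix.diagonal_apply]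
  by_cases h : p = q
  · simp [h]
  · simp [h]

lemma piK_diag (n : ℕ) (X : Finset (Finset (Fin n))) (k : ℕ) :
    PiK n X k = Matrix.diagonal fun p =>
      if ∃ s ∈ X, s.card = k + 1 ∧ p = encode n (some (s, false)) then 1 else 0 := by
  ext p q
  rw [PiK, Matrix.of_apply, Matrix.diagonal_apply]
  by_cases h : p = q
  · simp [h]
  · simp [h]

lemma compress_hz (n α : ℕ) (U : Matrix (QIdx n × (Fin α → Bool)) (QIdx n × (Fin α → Bool)) ℂ) :
    compressA n α ((hzGate n ⊗ₖ (1 : Matrix (Fin α → Bool) (Fin α → Bool) ℂ)) * U) =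
      hzGate n * compressA n α U := by
  ext p q
  simp only [compressA, Matrix.of_apply, Matrix.mul_apply, Fintype.sum_prod_type (f := fun x : QIdx n × (Fin α → Bool) => _),
    Matrix.kroneckerMap_apply]
  refine Finset.sum_congr rfl fun r _ => ?_
  rw [Finset.sum_eq_single (fun _ => false)]
  · simp
  · intro b _ hb
    rw [Matrix.one_apply_ne hb.symm]; simp
  · simp

lemma hz_entry (n : ℕ) (C : Matrix (QIdx n) (QIdx n) ℂ) (s : Finset (Fin n)) (q : QIdx n) :
    (hzGate n * C) (encode n (some (s, false))) q =
      ((Real.sqrt 2 : ℂ))⁻¹ * (C (encode n (some (s, false))) q -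
        C (encode n (some (s, true))) q) := by
  rw [Matrix.mul_apply]
  have hne : encode n (some (s, false)) ≠ encode n (some (s, true)) := by simp [encode]
  rw [Finset.sum_eq_add_of_mem _ _ (Finset.mem_univ _) (Finset.mem_univ _) hne]
  · simp only [hzGate, encode, Matrix.of_apply]
    simp; ring
  · rintro ⟨a, b, c⟩ - ⟨h1, h2⟩
    rw [hzGate, Matrix.of_apply, if_neg, zero_mul]
    rintro ⟨e1, e2⟩
    simp only [encode] at e1 e2 h1 h2
    subst e1 e2
    cases b
    · exact h1 rfl
    · exact h2 rfl

/-- If `U` is a unitary encoding of `Π_k^± P^{up} Π_k^±` with an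
`α`-qubit ancilla, then `V = ((I^{⊗n} ⊗ HZ ⊗ I) ⊗ I^{⊗α}) U` is a unitary encoding of
`Δ_k^{up}/(√2 · K^{up})`. -/
theorem up_walk_encodes_up_laplacian (n k α : ℕ) (X : Finset (Finset (Fin n)))
    (hX : IsComplex n X) (w : Fin n → ℝ) (hw : ∀ v, 0 < w v)
    (hne : (simplices n X k).Nonempty)
    (U : Matrix (QIdx n × (Fin α → Bool)) (QIdx n × (Fin α → Bool)) ℂ)
    (hU : U ∈ Matrix.unitaryGroup (QIdx n × (Fin α → Bool)) ℂ)
    (henc : PiPM n X k * compressA n α U * PiPM n X k =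
      PiPM n X k * toQMat n (Pup n X w k) * PiPM n X k) :
    PiK n X k *
        compressA n α ((hzGate n ⊗ₖ (1 : Matrix (Fin α → Bool) (Fin α → Bool) ℂ)) * U) *
        PiK n X k =
      ((Real.sqrt 2 : ℂ) * (Kup n X w k : ℂ))⁻¹ • lapQ n (upLap n X w k) := by
  rw [compress_hz]
  rw [piPM_diag] at henc
  rw [piK_diag]
  ext p q
  rw [Matrix.mul_diagonal, Matrix.diagonal_mul, Matrix.smul_apply]
  by_cases hp : ∃ s ∈ X, s.card = k + 1 ∧ p = encode n (some (s, false))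
  swap
  · rw [if_neg hp, zero_mul, zero_mul]
    symm
    rw [lapQ, Matrix.of_apply]
    split_ifs with h
    · by_contra h0
      have h1 : upLap n X w k (Finset.univ.filter fun i => p.1 i = true)
          (Finset.univ.filter fun i => q.1 i = true) ≠ 0 := by
        intro h2; rw [h2] at h0; simp at h0
      obtain ⟨⟨a, b⟩, _⟩ := lap_zero n X hX w k _ _ h1
      have e := exists_encode n p h.2.1
      rw [h.1] at e
      exact hp ⟨_, a, b, e⟩
    · simp
  by_cases hq : ∃ s ∈ X, s.card = k + 1 ∧ q = encode n (some (s, false))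
  swap
  · rw [if_neg hq, mul_zero]
    symm
    rw [lapQ, Matrix.of_apply]
    split_ifs with h
    · by_contra h0
      have h1 : upLap n X w k (Finset.univ.filter fun i => p.1 i = true)
          (Finset.univ.filter fun i => q.1 i = true) ≠ 0 := by
        intro h2; rw [h2] at h0; simp at h0
      obtain ⟨_, ⟨a, b⟩⟩ := lap_zero n X hX w k _ _ h1
      have e := exists_encode n q h.2.2.2
      rw [h.2.2.1] at e
      exact hq ⟨_, a, b, e⟩
    · simp
  rw [if_pos hp, if_pos hq]
  obtain ⟨s, hsX, hs, rfl⟩ := hp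
  obtain ⟨t, htX, ht, rfl⟩ := hq
  have hC : ∀ b : Bool, compressA n α U (encode n (some (s, b))) (encode n (some (t, false))) =
      (Pup n X w k (some (t, false)) (some (s, b)) : ℂ) := by
    intro b
    have h := congrFun (congrFun henc (encode n (some (s, b)))) (encode n (some (t, false)))
    rw [Matrix.mul_diagonal, Matrix.diagonal_mul, Matrix.mul_diagonal, Matrix.diagonal_mul,
      if_pos ⟨(s, b), hsX, hs, rfl⟩, if_pos ⟨(t, false), htX, ht, rfl⟩] at h
    simp only [one_mul, mul_one] at h
    rw [h, toQMat, Matrix.of_apply, decode_encode, decode_encode]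
  rw [hz_entry, hC, hC, ← Complex.ofReal_sub, key n X w k s t hsX hs htX ht]
  simp [lapQ, encode]
  ring
end QWSC
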